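/- The factor complexity of the generalized pseudostandard word u_p = u(1^ω,(EERR)^ω) satisfies C(n) > 4n for all n ≥ 10. -/

import Mathlib

abbrev Word := List Bool

/-- The exchange antimorphism `E`: complement each letter and reverse. -/
def Ebar (w : Word) : Word := (w.map Bool.not).reverse

def IsPal (w : Word) : Prop := w.reverse = w
def IsEPal (w : Word) : Prop := Ebar w = w

open Classical in
lemma exists_minLength {Q : Word → Prop} (hex : ∃ v, Q v) :
    ∃ v, Q v ∧ ∀ v', Q v' → v.length ≤ v'.length := by
  classical
  have h : ∃ n, ∃ v, Q v ∧ v.length = n := ⟨_, hex.choose, hex.choose_spec, rfl⟩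
  obtain ⟨v, hv, hlen⟩ := Nat.find_spec h
  exact ⟨v, hv, fun v' hv' => by
    rw [hlen]; exact Nat.find_min' h ⟨v', hv', rfl⟩⟩

lemma pal_ext (w : Word) : ∃ v, w <+: v ∧ IsPal v :=
  ⟨w ++ w.reverse, List.prefix_append _ _, by simp [IsPal]⟩

lemma epal_ext (w : Word) : ∃ v, w <+: v ∧ IsEPal v :=
  ⟨w ++ Ebar w, List.prefix_append _ _, by
    simp [IsEPal, Ebar, List.map_reverse, List.map_map, Function.comp_def, Bool.not_not]⟩

/-- The palindromic closure: the shortest palindrome having `w` as a prefix. -/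
noncomputable def palCl (w : Word) : Word := (exists_minLength (pal_ext w)).choose

/-- The pseudopalindromic closure: the shortest `E`-palindrome having `w` as a prefix. -/
noncomputable def epalCl (w : Word) : Word := (exists_minLength (epal_ext w)).choose

/-- Prefixes of the generalized pseudostandard word `u(1^ω, (EERR)^ω)`
(the letter `1` is `true`). -/
noncomputable def wp : ℕ → Word
  | 0 => []
  | n+1 => if (n+1) % 4 = 1 ∨ (n+1) % 4 = 2
           then epalCl (wp n ++ [true])
           else palCl (wp n ++ [true])

/-- Factors of `u_p`. -/
def FactorUp (v : Word) : Prop := ∃ n, v <:+: wp n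

/-- Factor complexity of `u_p`. -/
noncomputable def Cp (n : ℕ) : ℕ := Set.ncard {v : Word | FactorUp v ∧ v.length = n}



def te (j : ℕ) : Bool := decide (j % 4 = 1 ∨ j % 4 = 2)

noncomputable def el (n : ℕ) : ℕ := (wp n).length

noncomputable def uu (i : ℕ) : Bool := (wp (i+1)).getD i false

def PP (f : ℕ → Bool) (e : Bool) (L : ℕ) : Prop := ∀ i, i < L → f (L-1-i) = xor e (f i)

lemma pal_iff (v : Word) : IsPal v ↔ PP (fun i => v.getD i false) false v.length := by
  unfold IsPal PP
  constructor
  · intro h i hi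
    have h1 : v.reverse.getD i false = v.getD i false := by rw [h]
    rw [List.getD_eq_getElem _ _ (by simpa using hi), List.getElem_reverse] at h1
    simp only [Bool.false_xor]
    rw [List.getD_eq_getElem _ _ (by omega)]
    exact h1
  · intro h
    apply List.ext_getElem (by simp)
    intro i h1 h2
    have := h i h2
    simp only [Bool.false_xor] at this
    rw [List.getD_eq_getElem _ _ (by omega), List.getD_eq_getElem _ _ (by omega)] at this
    rw [List.getElem_reverse]; exact this

lemma epal_iff (v : Word) : IsEPal v ↔ PP (fun i => v.getD i false) true v.length := by
  unfold IsEPal PP Ebar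
  constructor
  · intro h i hi
    have h1 : ((v.map Bool.not).reverse).getD i false = v.getD i false := by rw [h]
    rw [List.getD_eq_getElem _ _ (by simpa using hi), List.getElem_reverse] at h1
    simp only [Bool.true_xor]
    rw [List.getD_eq_getElem _ _ (by omega), ← h1]
    simp
  · intro h
    apply List.ext_getElem (by simp)
    intro i h1 h2
    have := h i h2
    simp only [Bool.true_xor] at this
    rw [List.getD_eq_getElem _ _ (by omega), List.getD_eq_getElem _ _ (by omega)] at this
    rw [List.getElem_reverse]
    simp [this]

lemma wp_spec (n : ℕ) : (wp n ++ [true] <+: wp (n+1) ∧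
    PP (fun i => (wp (n+1)).getD i false) (te (n+1)) (wp (n+1)).length) ∧
    ∀ v : Word, wp n ++ [true] <+: v → PP (fun i => v.getD i false) (te (n+1)) v.length →
      (wp (n+1)).length ≤ v.length := by
  by_cases h : (n+1) % 4 = 1 ∨ (n+1) % 4 = 2
  · have ht : te (n+1) = true := by simp [te, h]
    have hw : wp (n+1) = epalCl (wp n ++ [true]) := by rw [wp, if_pos h]
    obtain ⟨⟨h1, h2⟩, h3⟩ := (exists_minLength (epal_ext (wp n ++ [true]))).choose_spec
    rw [ht, hw]
    exact ⟨⟨h1, (epal_iff _).1 h2⟩, fun v a b => h3 v ⟨a, (epal_iff _).2 b⟩⟩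
  · have ht : te (n+1) = false := by simp [te, h]
    have hw : wp (n+1) = palCl (wp n ++ [true]) := by rw [wp, if_neg h]
    obtain ⟨⟨h1, h2⟩, h3⟩ := (exists_minLength (pal_ext (wp n ++ [true]))).choose_spec
    rw [ht, hw]
    exact ⟨⟨h1, (pal_iff _).1 h2⟩, fun v a b => h3 v ⟨a, (pal_iff _).2 b⟩⟩

lemma el_zero : el 0 = 0 := by simp [el, wp]

lemma el_lt (n : ℕ) : el n < el (n+1) := by
  have := (wp_spec n).1.1.length_le
  simp at this; exact this

lemma el_mono : StrictMono el := strictMono_nat_of_lt_succ el_lt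

lemma le_el (n : ℕ) : n ≤ el n := el_mono.id_le n

lemma wp_prefix {m n : ℕ} (h : m ≤ n) : wp m <+: wp n := by
  induction n, h using Nat.le_induction with
  | base => exact List.prefix_rfl
  | succ k _ ih => exact ih.trans ((List.prefix_append _ _).trans (wp_spec k).1.1)

lemma prefix_getD {a b : Word} (h : a <+: b) {i : ℕ} (hi : i < a.length) :
    a.getD i false = b.getD i false := by
  obtain ⟨c, rfl⟩ := h
  rw [List.getD_append _ _ _ _ hi]

lemma wp_getD {n i : ℕ} (h : i < el n) : (wp n).getD i false = uu i := by
  unfold uu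
  rcases le_total n (i+1) with h1 | h1
  · exact prefix_getD (wp_prefix h1) h
  · exact (prefix_getD (wp_prefix h1) (by have := le_el (i+1); unfold el at this; omega)).symm

lemma uu_el (n : ℕ) : uu (el n) = true := by
  rw [← wp_getD (el_lt n), ← prefix_getD (wp_spec n).1.1 (by simp [el])]
  simp [el]

lemma PP_el (n : ℕ) : PP uu (te n) (el n) := by
  cases n with
  | zero => intro i hi; rw [el_zero] at hi; omega
  | succ n =>
    intro i hi
    have := (wp_spec n).1.2 i hi
    simp only at this
    rw [wp_getD hi, wp_getD (by unfold el at *; omega)] at this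
    exact this

lemma el_min (n : ℕ) (f : ℕ → Bool) (L : ℕ) (hf : ∀ i, i ≤ el n → f i = uu i)
    (hL : el n < L) (hp : PP f (te (n+1)) L) : el (n+1) ≤ L := by
  have hlen : ((List.range L).map f).length = L := by simp
  have hg : ∀ i, i < L → ((List.range L).map f).getD i false = f i := by
    intro i hi
    rw [List.getD_eq_getElem _ _ (by simpa using hi)]; simp
  have := (wp_spec n).2 ((List.range L).map f) ?_ ?_
  · rw [hlen] at this; exact this
  · rw [List.prefix_iff_eq_take]
    apply List.ext_getElem
    · simp; unfold el at hL; omega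
    · intro i h1 h2
      have h3 : i ≤ el n := by simp at h1; unfold el; omega
      have e1 : (wp n ++ [true])[i] = uu i := by
        rw [← wp_getD (lt_of_le_of_lt h3 (el_lt n)), ← prefix_getD (wp_spec n).1.1 h1,
          List.getD_eq_getElem _ _ h1]
      rw [e1, ← hf i h3]; simp
  · rw [hlen]
    intro i hi
    simp only
    rw [hg _ hi, hg _ (by omega)]
    exact hp i hi

lemma el_min' (n L : ℕ) (hL : el n < L) (hp : PP uu (te (n+1)) L) : el (n+1) ≤ L :=
  el_min n uu L (fun _ _ => rfl) hL hp

/-- upper bound from a candidate center -/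
lemma el_up_gen (n c : ℕ) (hc : el n < c) (hc2 : c ≤ 2 * el n + 2)
    (h : ∀ i, i ≤ el n → c - 1 - i ≤ el n → i < c → uu (c-1-i) = xor (te (n+1)) (uu i)) :
    el (n+1) ≤ c := by
  apply el_min n (fun i => if i ≤ el n then uu i else xor (te (n+1)) (uu (c-1-i))) c _ hc
  · intro i hi
    by_cases h1 : i ≤ el n <;> by_cases h2 : c-1-i ≤ el n
    · simp only [h1, h2, if_true]; exact h i h1 h2 hi
    · simp only [h1, h2, if_true, if_false]
      rw [show c - 1 - (c-1-i) = i by omega]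
    · simp only [h1, h2, if_true, if_false]; simp
    · omega
  · intro i hi; simp [hi]

lemma el_le (n : ℕ) : el (n+1) ≤ 2 * el n + 2 :=
  el_up_gen n _ (by omega) le_rfl (fun i h1 h2 h3 => by omega)

lemma el_up (n M : ℕ) (hM : M < el n) (hp : PP uu (te (n+1)) M)
    (hu : uu M = !(xor (te n) (te (n+1)))) : el (n+1) ≤ 2 * el n - M := by
  have key : ∀ t, t ≤ M → uu (el n - M + t) = xor (te n) (uu (M - 1 - t)) ∨ t = M := by
    intro t ht
    by_cases h : t = M
    · exact Or.inr h
    · left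
      rw [← PP_el n (M-1-t) (by omega)]; congr 1; omega
  have h0 : uu (el n - M - 1) = xor (te (n+1)) true := by
    have := PP_el n M hM
    rw [show el n - M - 1 = el n - 1 - M by omega, this, hu]
    cases te n <;> cases te (n+1) <;> rfl
  apply el_up_gen n _ (by omega) (by omega)
  intro i h1 h2 h3
  by_cases ha : i = el n
  · subst ha
    rw [uu_el, ← h0, show 2 * el n - M - 1 - el n = el n - M - 1 by omega]
  by_cases hb : i = el n - M - 1
  · rw [hb, h0, show 2 * el n - M - 1 - (el n - M - 1) = el n by omega, uu_el]
    cases te (n+1) <;> rfl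
  obtain ⟨t, rfl⟩ : ∃ t, i = el n - M + t := ⟨i - (el n - M), by omega⟩
  have k1 := (key t (by omega)).resolve_right (by omega)
  have k2 := (key (M-1-t) (by omega)).resolve_right (by omega)
  rw [k1, show 2 * el n - M - 1 - (el n - M + t) = el n - M + (M-1-t) by omega, k2,
    hp (M-1-t) (by omega)]
  cases te n <;> cases te (n+1) <;> simp

lemma el_low (n M : ℕ) (h : el (n+1) + M = 2 * el n) :
    M < el n ∧ PP uu (te (n+1)) M ∧ uu M = !(xor (te n) (te (n+1))) := by
  have hlt := el_lt n
  refine ⟨by omega, ?_, ?_⟩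
  · intro t ht
    have a1 := PP_el n t (by omega)
    have a2 := PP_el n (M-1-t) (by omega)
    have a3 := PP_el (n+1) (el n - 1 - t) (by omega)
    rw [show el (n+1) - 1 - (el n - 1 - t) = el n - 1 - (M-1-t) by omega, a2, a1] at a3
    revert a3
    cases te n <;> cases te (n+1) <;> cases uu t <;> cases uu (M-1-t) <;> simp
  · have a1 := PP_el n M (by omega)
    have a2 := PP_el (n+1) (el n) (by omega)
    rw [show el (n+1) - 1 - el n = el n - 1 - M by omega, a1, uu_el] at a2
    revert a2
    cases te n <;> cases te (n+1) <;> cases uu M <;> simp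

lemma el_not_odd (n : ℕ) (h : te (n+1) = true) : el (n+1) ≠ 2 * el n + 1 := by
  intro h1
  have := PP_el (n+1) (el n) (by omega)
  rw [h, show el (n+1) - 1 - el n = el n by omega] at this
  cases uu (el n) <;> simp at this

/-- antiperiod / period of consecutive or nested pseudopalindromic prefixes -/
lemma nest {a b : Bool} {A B : ℕ} (hA : PP uu a A) (hB : PP uu b B) (h : A ≤ B) (t : ℕ) (ht : t < A) :
    uu (B - A + t) = xor (xor a b) (uu t) := by
  have h1 := hA t ht
  have h2 := hB (A-1-t) (by omega)
  rw [show B - 1 - (A-1-t) = B - A + t by omega, h1] at h2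
  rw [h2]; cases a <;> cases b <;> simp

def PC (n : ℕ) : Prop := ∀ e M, M ≤ el n → PP uu e M →
  M = 0 ∨ (e = false ∧ (M = 1 ∨ M = 3)) ∨ ∃ j, j ≤ n ∧ M = el j ∧ e = te j

def IC (j : ℕ) : Prop :=
  (j % 4 = 1 → el j % 2 = 0 ∧ uu (el j / 2 - 1) = true) ∧
  ((j % 4 = 1 ∨ j % 4 = 2) → 2 ≤ j → el j % 2 = 0 ∧ uu (el j / 2 - 2) = true) ∧
  (j % 4 = 3 → el j % 2 = 1 ∧ uu ((el j - 1) / 2) = true) ∧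
  (j % 4 = 0 → el j % 2 = 0)

lemma u0 : uu 0 = true := by have := uu_el 0; rwa [el_zero] at this

lemma el1 : el 1 = 2 := by
  have h1 := el_le 0
  have h2 := el_lt 0
  have h3 := el_not_odd 0 (by decide)
  simp only [el_zero, Nat.reduceAdd, Nat.zero_add] at *
  omega

lemma u1 : uu 1 = false := by
  have := PP_el 1 0 (by rw [el1]; omega)
  rw [el1, u0] at this; simpa [te] using this

lemma u2 : uu 2 = true := by have := uu_el 1; rwa [el1] at this

lemma el2 : el 2 = 4 := by
  have h1 := el_lt 1
  have h2 := el_up 1 0 (by rw [el1]; omega) (by intro i hi; omega) (by rw [u0]; decide)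
  have h3 : el 2 ≠ 3 := by
    intro h
    have := (el_low 1 1 (by rw [h, el1])).2.1 0 (by omega)
    simp [u0, te] at this
  simp only [el1, Nat.reduceAdd] at *
  omega

lemma u3 : uu 3 = false := by
  have := PP_el 2 0 (by rw [el2]; omega)
  rw [el2, u0] at this; simpa [te] using this

lemma u4 : uu 4 = true := by have := uu_el 2; rwa [el2] at this

lemma el3 : el 3 = 5 := by
  have h1 := el_lt 2
  have h2 := el_up 2 3 (by rw [el2]; omega)
    (by intro i hi; interval_cases i <;> simp [u0, u1, u2, te]) (by rw [u3]; decide)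
  simp only [el2, Nat.reduceAdd] at *
  omega

lemma u5 : uu 5 = true := by have := uu_el 3; rwa [el3] at this

lemma el4 : el 4 = 10 := by
  have h1 := el_lt 3
  have h2 := el_up 3 0 (by rw [el3]; omega) (by intro i hi; omega) (by rw [u0]; decide)
  simp only [el3] at *
  have h3 : el 4 ≠ 6 := by
    intro h
    have := (el_low 3 4 (by rw [h, el3])).2.1 0 (by omega)
    simp [u0, u3, te] at this
  have h4 : el 4 ≠ 7 := by
    intro h
    have := (el_low 3 3 (by rw [h, el3])).2.2
    simp [u3, te] at this
  have h5 : el 4 ≠ 8 := by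
    intro h
    have := (el_low 3 2 (by rw [h, el3])).2.1 0 (by omega)
    simp [u0, u1, te] at this
  have h6 : el 4 ≠ 9 := by
    intro h
    have := (el_low 3 1 (by rw [h, el3])).2.2
    simp [u1, te] at this
  simp only [Nat.reduceAdd] at *
  omega

lemma u6 : uu 6 = false := by
  have := PP_el 4 3 (by rw [el4]; omega)
  rw [el4, u3] at this; simpa [te] using this
lemma u7 : uu 7 = true := by
  have := PP_el 4 2 (by rw [el4]; omega)
  rw [el4, u2] at this; simpa [te] using this
lemma u8 : uu 8 = false := by
  have := PP_el 4 1 (by rw [el4]; omega)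
  rw [el4, u1] at this; simpa [te] using this
lemma u9 : uu 9 = true := by
  have := PP_el 4 0 (by rw [el4]; omega)
  rw [el4, u0] at this; simpa [te] using this

lemma PC4 : PC 4 := by
  intro e M hM hp
  rw [el4] at hM
  have b0 := hp 0
  have b1 := hp 1
  have b2 := hp 2
  have b3 := hp 3
  have b4 := hp 4
  interval_cases M
  · simp
  · cases e <;> simp [u0] at *
  · cases e <;> simp [u0, u1] at *
    exact ⟨1, by omega, by rw [el1], by decide⟩
  · cases e <;> simp [u0, u2] at *
  · cases e <;> simp [u0, u3] at *
    exact ⟨2, by omega, by rw [el2], by decide⟩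
  · cases e <;> simp [u0, u4] at *
    exact ⟨3, by omega, by rw [el3], by decide⟩
  · cases e <;> simp [u0, u1, u4, u5] at *
  · cases e <;> simp [u0, u1, u2, u3, u4, u5, u6, u7, u8] at *
  · cases e <;> simp [u0, u1, u2, u3, u4, u5, u6, u7, u8] at *
  · cases e <;> simp [u0, u1, u2, u3, u4, u5, u6, u7, u8] at *
  · cases e <;> simp [u0, u9] at *
    exact ⟨4, by omega, by rw [el4], by decide⟩

lemma IC4 (j : ℕ) (hj : j ≤ 4) : IC j := by
  interval_cases j <;> simp [IC, el_zero, el1, el2, el3, el4, u0, u2]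

lemma te_add4 (j : ℕ) : te (j+4) = te j := by simp [te]

lemma te_true {j : ℕ} (h : j % 4 = 1 ∨ j % 4 = 2) : te j = true := by simp [te, h]
lemma te_false {j : ℕ} (h : j % 4 = 3 ∨ j % 4 = 0) : te j = false := by
  simp [te]; omega
lemma te_eq_true {j : ℕ} : te j = true ↔ (j % 4 = 1 ∨ j % 4 = 2) := by simp [te]
lemma te_eq_false {j : ℕ} : te j = false ↔ (j % 4 = 3 ∨ j % 4 = 0) := by simp [te]; omega

lemma stepE {n : ℕ} (hn : n % 4 = 0) (hP : PC n) : el (n+1) = 2 * el n + 2 := by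
  have h1 := el_le n
  have tn : te n = false := te_false (Or.inr hn)
  have tn1 : te (n+1) = true := te_true (by omega)
  have h2 := el_not_odd n tn1
  by_contra hne
  obtain ⟨a, b, c⟩ := el_low n (2 * el n - el (n+1)) (by omega)
  rw [tn, tn1] at *
  rcases hP _ _ a.le b with h | ⟨h, _⟩ | ⟨j, hj, h, _⟩
  · rw [h, u0] at c; simp at c
  · simp at h
  · rw [h, uu_el] at c; simp at c

lemma stepR {n : ℕ} (hn : n % 4 = 2) (hP : PC n) : el (n+1) + 3 = 2 * el n := by
  have tn : te n = true := te_true (Or.inr hn)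
  have tn1 : te (n+1) = false := te_false (by omega)
  have h4 : 4 ≤ el n := by rw [← el2]; exact el_mono.monotone (by omega)
  have h1 := el_up n 3 (by omega) (by rw [tn1]; intro i hi; interval_cases i <;> simp [u0, u2])
    (by rw [u3, tn, tn1]; rfl)
  by_contra hne
  obtain ⟨a, b, c⟩ := el_low n (2 * el n - el (n+1)) (by omega)
  rw [tn, tn1] at *
  rcases hP _ _ a.le b with h | ⟨_, h⟩ | ⟨j, hj, h, _⟩
  · omega
  · omega
  · rw [h, uu_el] at c; simp at c

lemma stepV {n : ℕ} (hn : n % 2 = 1) (h3 : 3 ≤ n) (hP : PC n) :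
    el (n+1) + el (n-3) = 2 * el n := by
  obtain ⟨m, rfl⟩ : ∃ m, n = m + 3 := ⟨n-3, by omega⟩
  simp only [Nat.add_sub_cancel]
  have hm : el m < el (m+3) := el_mono (by omega)
  have t1 : te (m+3+1) = te m := te_add4 m
  have t2 : te (m+3) = te m := by
    rcases (by omega : m % 4 = 0 ∨ m % 4 = 2) with h | h
    · rw [te_false (Or.inr h), te_false (by omega)]
    · rw [te_true (Or.inr h), te_true (by omega)]
  have h1 := el_up (m+3) (el m) hm (by rw [t1]; exact PP_el m) (by rw [uu_el, t1, t2]; simp)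
  by_contra hne
  obtain ⟨a, b, c⟩ := el_low (m+3) (2 * el (m+3) - el (m+3+1)) (by omega)
  have hM : el m < 2 * el (m+3) - el (m+3+1) := by omega
  rw [t1, t2] at *
  generalize 2 * el (m+3) - el (m+3+1) = M at *
  rcases hP _ _ a.le b with h | ⟨he, h⟩ | ⟨j, hj, h, he⟩
  · omega
  · rcases h with rfl | rfl
    · simp [u1] at c
    · simp [u3] at c
  · subst h
    have j1 := el_mono.lt_iff_lt.1 hM
    have j2 := el_mono.lt_iff_lt.1 a
    rcases (by omega : m % 4 = 0 ∨ m % 4 = 2) with h | h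
    · rw [te_false (Or.inr h), eq_comm, te_eq_false] at he; omega
    · rw [te_true (Or.inr h), eq_comm, te_eq_true] at he; omega

lemma stepI {n : ℕ} (h4 : 4 ≤ n) (hP : PC n) (hI : ∀ j, j ≤ n → IC j) : IC (n+1) := by
  have hN : 10 ≤ el n := by rw [← el4]; exact el_mono.monotone h4
  have last := PP_el n 0 (by omega)
  have last1 := PP_el n 1 (by omega)
  rw [u0] at last
  rw [u1] at last1
  rcases (by omega : n % 4 = 0 ∨ n % 4 = 1 ∨ n % 4 = 2 ∨ n % 4 = 3) with h | h | h | h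
  · have hs := stepE h hP
    rw [te_false (Or.inr h)] at last
    refine ⟨fun _ => ⟨by omega, ?_⟩, fun _ _ => ⟨by omega, ?_⟩, fun _ => by omega, fun _ => by omega⟩
    · rw [show el (n+1) / 2 - 1 = el n by omega, uu_el]
    · rw [show el (n+1) / 2 - 2 = el n - 1 - 0 by omega, last]; rfl
  · have hs := stepV (by omega) (by omega) hP
    have hi := (hI (n-3) (by omega)).2.1 (by omega) (by omega)
    have hl : el (n-3) < el n := el_mono (by omega)
    have hl4 : 4 ≤ el (n-3) := by rw [← el2]; exact el_mono.monotone (by omega)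
    refine ⟨fun _ => by omega, fun _ _ => ⟨by omega, ?_⟩, fun _ => by omega, fun _ => by omega⟩
    have := nest (PP_el (n-3)) (PP_el n) hl.le (el (n-3) / 2 - 2) (by omega)
    rw [show el n - el (n-3) + (el (n-3) / 2 - 2) = el (n+1) / 2 - 2 by omega, hi.2,
      te_true (by omega), te_true (by omega)] at this
    rw [this]; rfl
  · have hs := stepR h hP
    rw [te_true (Or.inr h)] at last1
    refine ⟨fun _ => by omega, fun _ _ => by omega, fun _ => ⟨by omega, ?_⟩, fun _ => by omega⟩
    rw [show (el (n+1) - 1) / 2 = el n - 1 - 1 by omega, last1]; rfl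
  · have hs := stepV (by omega) (by omega) hP
    have hi := (hI (n-3) (by omega)).2.2.2 (by omega)
    exact ⟨fun _ => by omega, fun _ _ => by omega, fun _ => by omega, fun _ => by omega⟩

lemma stepP {n : ℕ} (h4 : 4 ≤ n) (hP : PC n) (hI : ∀ j, j ≤ n → IC j) (hI1 : IC (n+1)) :
    PC (n+1) := by
  intro e p hp hpp
  by_cases hle : p ≤ el n
  · rcases hP e p hle hpp with h | h | ⟨j, hj, h⟩
    · exact Or.inl h
    · exact Or.inr (Or.inl h)
    · exact Or.inr (Or.inr ⟨j, by omega, h⟩)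
  push Not at hle
  by_cases he : e = te (n+1)
  · subst he
    have := el_min' n p hle hpp
    exact Or.inr (Or.inr ⟨n+1, le_rfl, by omega, rfl⟩)
  exfalso
  have hN : 10 ≤ el n := by rw [← el4]; exact el_mono.monotone h4
  have he' : e = !(te (n+1)) := by revert he; cases e <;> cases te (n+1) <;> simp
  have anti : ∀ t, t < p → uu (el (n+1) - p + t) = !(uu t) := by
    intro t ht
    rw [nest hpp (PP_el (n+1)) hp t ht, he']
    cases te (n+1) <;> simp
  have hpL : p ≠ el (n+1) := by
    intro h
    have := anti 0 (by omega)
    rw [h] at this; simp at this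
  have hle2 := el_le n
  obtain ⟨x, hx⟩ : ∃ x, 2 * p = el (n+1) + x := ⟨2*p - el (n+1), by omega⟩
  have ppx : PP uu (te (n+1)) x := by
    intro t ht
    have a1 := anti t (by omega)
    have a2 := hpp (x-1-t) (by omega)
    rw [show p - 1 - (x-1-t) = el (n+1) - p + t by omega, a1, he'] at a2
    revert a2
    cases te (n+1) <;> cases uu t <;> cases uu (x-1-t) <;> simp
  have hxn : x ≤ el n := by
    by_contra hc
    have := el_min' n x (by omega) ppx
    omega
  have hx' := hP _ _ hxn ppx
  rcases (by omega : n % 4 = 0 ∨ n % 4 = 1 ∨ n % 4 = 2 ∨ n % 4 = 3) with h | h | h | h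
  · have hs := stepE h hP
    have i1 := hI1.1 (by omega)
    have i2 := hI1.2.1 (by omega) (by omega)
    rw [te_true (by omega)] at hx'
    rcases hx' with h0 | ⟨h0, _⟩ | ⟨j, hj, hxj, hte⟩
    · have q := hpp 0 (by omega)
      have q1 := hpp 1 (by omega)
      have l := PP_el n 0 (by omega)
      rw [he', te_true (by omega)] at q1
      rw [te_false (Or.inr h)] at l
      rw [show p - 1 - 1 = el n - 1 - 0 by omega, l, u0, u1] at q1
      simp at q1
    · simp at h0
    · rw [eq_comm, te_eq_true] at hte
      rcases hte with hj1 | hj2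
      · have k := (hI j hj).1 hj1
        have l2 : 2 ≤ el j := by rw [← el1]; exact el_mono.monotone (by omega)
        have q := anti (el j / 2 - 1) (by omega)
        rw [show el (n+1) - p + (el j / 2 - 1) = el (n+1) / 2 - 1 by omega, i1.2, k.2] at q
        simp at q
      · have k := (hI j hj).2.1 (Or.inr hj2) (by omega)
        have l2 : 4 ≤ el j := by rw [← el2]; exact el_mono.monotone (by omega)
        have q := anti (el j / 2 - 2) (by omega)
        rw [show el (n+1) - p + (el j / 2 - 2) = el (n+1) / 2 - 2 by omega, i2.2, k.2] at q
        simp at q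
  · have hs := stepV (by omega) (by omega) hP
    have i2 := hI1.2.1 (by omega) (by omega)
    have hl4 : 4 ≤ el (n-3) := by rw [← el2]; exact el_mono.monotone (by omega)
    rw [te_true (by omega)] at hx'
    rcases hx' with h0 | ⟨h0, _⟩ | ⟨j, hj, hxj, hte⟩
    · omega
    · simp at h0
    · rw [eq_comm, te_eq_true] at hte
      have : n - 3 < j := el_mono.lt_iff_lt.1 (by omega)
      have hjn : j = n := by omega
      subst hjn
      have k := (hI j hj).2.1 (by omega) (by omega)
      have q := anti (el j / 2 - 2) (by omega)
      rw [show el (j+1) - p + (el j / 2 - 2) = el (j+1) / 2 - 2 by omega, i2.2, k.2] at q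
      simp at q
  · have hs := stepR h hP
    have i3 := hI1.2.2.1 (by omega)
    rw [te_false (by omega)] at hx'
    rcases hx' with h0 | ⟨_, h0⟩ | ⟨j, hj, hxj, hte⟩
    · omega
    · omega
    · rw [eq_comm, te_eq_false] at hte
      rcases hte with hj1 | hj2
      · have k := (hI j hj).2.2.1 hj1
        have q := anti ((el j - 1) / 2) (by omega)
        rw [show el (n+1) - p + ((el j - 1) / 2) = (el (n+1) - 1) / 2 by omega, i3.2, k.2] at q
        simp at q
      · have k := (hI j hj).2.2.2 hj2
        omega
  · have hs := stepV (by omega) (by omega) hP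
    have i4 := hI1.2.2.2 (by omega)
    have hl4 : 10 ≤ el (n-3) ∨ n = 3 := by
      rcases (by omega : n = 3 ∨ 4 ≤ n - 3) with h | h
      · exact Or.inr h
      · left; rw [← el4]; exact el_mono.monotone h
    rw [te_false (by omega)] at hx'
    rcases hx' with h0 | ⟨_, h0⟩ | ⟨j, hj, hxj, hte⟩
    · omega
    · omega
    · rw [eq_comm, te_eq_false] at hte
      have : n - 3 < j := el_mono.lt_iff_lt.1 (by omega)
      have hjn : j = n := by omega
      subst hjn
      have k := (hI j hj).2.2.1 (by omega)
      omega

lemma PCIC (n : ℕ) : PC (n+4) ∧ ∀ j, j ≤ n+4 → IC j := by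
  induction n with
  | zero => exact ⟨PC4, fun j hj => IC4 j (by omega)⟩
  | succ n ih =>
    have hi := stepI (by omega) ih.1 ih.2
    refine ⟨?_, ?_⟩
    · have := stepP (by omega) ih.1 ih.2 hi
      rwa [show n + 1 + 4 = n + 4 + 1 by omega]
    · intro j hj
      by_cases h : j ≤ n + 4
      · exact ih.2 j h
      · rw [show j = n + 4 + 1 by omega]; exact hi

lemma PCn {n : ℕ} (h : 4 ≤ n) : PC n := by
  have := (PCIC (n-4)).1
  rwa [show n - 4 + 4 = n by omega] at this

/-- shape of the overlap is constant -/
lemma el_const {k : ℕ} (h : k % 2 = 1) : el (k+4) + 2 * el (k-1) = el k + 2 * el (k+3) := by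
  have aux : ∀ k, k % 2 = 1 → (k % 4 = 1 → el k = 2 * el (k-1) + 2) ∧
      (k % 4 = 3 → el k + 3 = 2 * el (k-1)) := by
    intro k hk
    by_cases h4 : 4 ≤ k - 1
    · have := PCn h4
      refine ⟨fun h => ?_, fun h => ?_⟩
      · have := stepE (n := k-1) (by omega) this
        rwa [show k - 1 + 1 = k by omega] at this
      · have := stepR (n := k-1) (by omega) this
        rwa [show k - 1 + 1 = k by omega] at this
    · have : k = 1 ∨ k = 3 := by omega
      rcases this with rfl | rfl <;> simp [el_zero, el1, el2, el3]
  have a := aux k h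
  have b := aux (k+4) (by omega)
  rw [show k + 4 - 1 = k + 3 by omega] at b
  omega
def L7 : List Bool := [true, false, true, false, true, true, false, true, false, true, true, false, false, true,
  false, true, false, false, true, false, true, false, true, true, false, true, false, true,
  true, false, false, true, false, true, false, false, true, false, true, false, true, false,
  false, true, false, true, false, false, true, true, false, true, false, true, true, false,
  true, false, true, false, false, true, false, true, false, false, true, true, false, true,
  false, true, true, false, true, false, true]

lemma factor_iff (v : Word) :
    FactorUp v ↔ ∃ i, ∀ t, t < v.length → uu (i+t) = v.getD t false := by
  constructor
  · rintro ⟨m, s, r, h⟩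
    refine ⟨s.length, fun t ht => ?_⟩
    have hl : s.length + t < el m := by
      unfold el; rw [← h]; simp; omega
    rw [← wp_getD hl, ← h, List.append_assoc, List.getD_append_right _ _ _ _ (by omega),
      Nat.add_sub_cancel_left, List.getD_append _ _ _ _ ht]
  · rintro ⟨i, h⟩
    have hm := le_el (i + v.length)
    refine ⟨i + v.length, ?_⟩
    have : v = ((wp (i + v.length)).drop i).take v.length := by
      apply List.ext_getElem
      · simp; unfold el at hm; omega
      · intro t h1 h2
        have e1 := h t h1
        rw [← wp_getD (n := i + v.length) (by omega), List.getD_eq_getElem _ _ h1,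
          List.getD_eq_getElem _ _ (by unfold el at hm; omega)] at e1
        rw [← e1]; simp
    generalize (wp (i + v.length)) = W at *
    rw [this]
    exact (List.take_prefix _ _).isInfix.trans (List.drop_suffix _ _).isInfix

lemma compl_seg (i n : ℕ) : ∃ i', ∀ t, t ≤ n → uu (i'+t) = !(uu (i+t)) := by
  have h1 := PP_el (4*(i+n+1)+1)
  have h2 := PP_el (4*(i+n+1)+3)
  have hl := le_el (4*(i+n+1)+1)
  rw [te_true (by omega)] at h1
  rw [te_false (by omega)] at h2
  have hm : el (4*(i+n+1)+1) ≤ el (4*(i+n+1)+3) := el_mono.monotone (by omega)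
  refine ⟨el (4*(i+n+1)+3) - el (4*(i+n+1)+1) + i, fun t ht => ?_⟩
  have := nest h1 h2 hm (i+t) (by omega)
  rw [← add_assoc] at this
  rw [this]; simp

lemma factor_compl {v : Word} (h : FactorUp v) : FactorUp (v.map Bool.not) := by
  rw [factor_iff] at h ⊢
  obtain ⟨i, hi⟩ := h
  obtain ⟨i', h'⟩ := compl_seg i v.length
  refine ⟨i', fun t ht => ?_⟩
  simp only [List.length_map] at ht
  rw [h' t ht.le, hi t ht, List.getD_eq_getElem _ _ ht, List.getD_eq_getElem _ _ (by simpa using ht)]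
  simp

lemma left_ext {v : Word} (h : FactorUp v) : ∃ c, FactorUp (c :: v) := by
  rw [factor_iff] at h
  obtain ⟨i, hi⟩ := h
  obtain ⟨m, hm0, hm⟩ : ∃ m, m % 4 = 1 ∧ i + v.length ≤ m := ⟨4 * (i+v.length)+1, by omega, by omega⟩
  have hl := le_el m
  have hlt : el m < el (m+4) := el_mono (by omega)
  have := nest (PP_el m) (PP_el (m+4)) hlt.le
  simp only [te_add4, Bool.xor_self, Bool.false_xor] at this
  refine ⟨uu (el (m+4) - el m + i - 1), ?_⟩
  rw [factor_iff]
  refine ⟨el (m+4) - el m + i - 1, fun t ht => ?_⟩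
  rcases t with _ | t
  · simp
  · simp only [List.length_cons, Nat.add_lt_add_iff_right] at ht
    rw [List.getD_cons_succ, ← hi t ht, ← this (i+t) (by omega)]
    congr 1; omega

def wd (f : ℕ → Bool) (n : ℕ) : Word := (List.range n).map f

lemma wd_length (f : ℕ → Bool) (n : ℕ) : (wd f n).length = n := by simp [wd]

lemma wd_getD (f : ℕ → Bool) {n t : ℕ} (h : t < n) : (wd f n).getD t false = f t := by
  rw [List.getD_eq_getElem _ _ (by simpa [wd] using h)]; simp [wd]

lemma factor_cons {c : Bool} {f : ℕ → Bool} {n i : ℕ} (h0 : uu i = c)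
    (h : ∀ t, t < n → uu (i+1+t) = f t) : FactorUp (c :: wd f n) := by
  rw [factor_iff]
  refine ⟨i, fun t ht => ?_⟩
  rcases t with _ | t
  · simpa using h0
  · simp only [List.length_cons, Nat.add_lt_add_iff_right, wd_length] at ht
    rw [List.getD_cons_succ, wd_getD _ ht, ← h t ht]
    congr 1; omega

def LSp (v : Word) : Prop := ∀ c, FactorUp (c :: v)

lemma LSp_compl {v : Word} (h : LSp v) : LSp (v.map Bool.not) := by
  intro c
  have := factor_compl (h (!c))
  simpa using this

lemma LSp_of {v : Word} {c : Bool} (h1 : FactorUp (c :: v)) (h2 : FactorUp ((!c) :: v)) : LSp v := by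
  intro d
  cases c <;> cases d <;> simpa using (by assumption)

lemma LS1 (n : ℕ) : LSp (wd uu n) := by
  have key : ∀ m, n ≤ m → FactorUp (xor (te m) true :: wd uu n) := by
    intro m hm
    have hl := le_el m
    have hlt : el m < el (m+4) := el_mono (by omega)
    have hn := nest (PP_el m) (PP_el (m+4)) hlt.le
    simp only [te_add4, Bool.xor_self, Bool.false_xor] at hn
    apply factor_cons (i := el (m+4) - 1 - el m)
    · rw [PP_el (m+4) (el m) hlt, uu_el, te_add4]
    · intro t ht
      rw [← hn t (by omega)]; congr 1; omega
  have a := key (4*n+1) (by omega)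
  have b := key (4*n+3) (by omega)
  rw [te_true (by omega)] at a
  rw [te_false (by omega)] at b
  exact LSp_of a (by simpa using b)

noncomputable def tw (k : ℕ) (t : ℕ) : Bool := if t < el k then uu t else !(uu (t - (el k - el (k-1))))

lemma LS2 (k n : ℕ) (hk : k % 2 = 1) (h3 : 3 ≤ k) (hn : n ≤ el (k+2)) : LSp (wd (tw k) n) := by
  have m1 : el (k-1) < el k := el_mono (by omega)
  have m2 : el k < el (k+2) := el_mono (by omega)
  have m3 : el (k+2) < el (k+3) := el_mono (by omega)
  have m4 : el (k+3) < el (k+4) := el_mono (by omega)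
  have hc := el_const hk
  have hv := stepV (n := k+2) (by omega) (by omega) (PCn (by omega))
  rw [show k + 2 + 1 = k + 3 by omega, show k + 2 - 3 = k - 1 by omega] at hv
  have hle := el_le (k-1)
  rw [show k - 1 + 1 = k by omega] at hle
  have t3 : te (k+3) = te (k-1) := by rw [← te_add4 (k-1), show k - 1 + 4 = k + 3 by omega]
  have t4 : te (k+4) = te k := te_add4 k
  have t0 : te k = !(te (k-1)) := by
    rcases (by omega : k % 4 = 1 ∨ k % 4 = 3) with h | h
    · rw [te_true (j := k) (by omega), te_false (j := k-1) (by omega)]; rfl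
    · rw [te_false (j := k) (by omega), te_true (j := k-1) (by omega)]; rfl
  have t2 : te (k+2) = te (k-1) := by
    rcases (by omega : k % 4 = 1 ∨ k % 4 = 3) with h | h
    · rw [te_false (j := k+2) (by omega), te_false (j := k-1) (by omega)]
    · rw [te_true (j := k+2) (by omega), te_true (j := k-1) (by omega)]
  have P0 := PP_el k
  have P1 := PP_el (k-1)
  have P2 := PP_el (k+2)
  have P3 := PP_el (k+3)
  have P4 := PP_el (k+4)
  rw [t2] at P2
  rw [t3] at P3
  rw [t4, t0] at P4
  rw [t0] at P0
  -- first occurrence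
  have F1 : FactorUp (xor (te (k-1)) true :: wd (tw k) n) := by
    apply factor_cons (i := el (k+3) - 1 - el (k-1))
    · rw [P3 _ (by omega), uu_el]
    · intro t ht
      rw [show el (k+3) - 1 - el (k-1) + 1 + t = el (k+3) - el (k-1) + t by omega]
      have small : ∀ t, t ≤ el (k-1) → uu (el (k+3) - el (k-1) + t) = uu t := by
        intro t ht
        rcases ht.lt_or_eq with h | h
        · rw [nest P1 P3 (by omega) t h]; simp
        · rw [h, show el (k+3) - el (k-1) + el (k-1) = el (k+3) by omega, uu_el, uu_el]
      unfold tw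
      split_ifs with h
      · by_cases h' : t ≤ el (k-1)
        · exact small t h'
        · have a := P4 (el (k+3) - el (k-1) + (el k - 1 - t)) (by omega)
          rw [small _ (by omega), P0 t h] at a
          rw [show el (k+3) - el (k-1) + t = el (k+4) - 1 - (el (k+3) - el (k-1) + (el k - 1 - t)) by omega, a]
          simp
      · have a := nest P3 P4 (by omega) (t - (el k - el (k-1))) (by omega)
        rw [show el (k+3) - el (k-1) + t = el (k+4) - el (k+3) + (t - (el k - el (k-1))) by omega, a]
        simp
  -- second occurrence
  have F2 : FactorUp (xor (te (k-1)) true :: wd (fun t => !(tw k t)) n) := by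
    apply factor_cons (i := el (k+2) - 1 - el k)
    · rw [P2 _ (by omega), uu_el]
    · intro t ht
      rw [show el (k+2) - 1 - el k + 1 + t = el (k+2) - el k + t by omega]
      unfold tw
      split_ifs with h
      · rw [nest P0 P2 (by omega) t h]; simp
      · have a := nest P2 P3 (by omega) (t - (el k - el (k-1))) (by omega)
        rw [show el (k+2) - el k + t = el (k+3) - el (k+2) + (t - (el k - el (k-1))) by omega, a]
        simp
  have F3 := factor_compl F2
  refine LSp_of F1 ?_
  have : wd (tw k) n = List.map Bool.not (wd (fun t => !(tw k t)) n) := by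
    simp [wd, Function.comp_def]
  rw [this]
  exact F3

lemma fin_F (n : ℕ) : {v : Word | FactorUp v ∧ v.length = n}.Finite :=
  (List.finite_length_eq Bool n).subset (fun v hv => hv.2)

lemma grow (n : ℕ) (S : Finset Word) (hS : ∀ v ∈ S, LSp v ∧ v.length = n) :
    Cp n + S.card ≤ Cp (n+1) := by
  classical
  have hc : ∀ v : Word, ∃ c, FactorUp v → FactorUp (c :: v) := by
    intro v
    by_cases h : FactorUp v
    · obtain ⟨c, hc⟩ := left_ext h; exact ⟨c, fun _ => hc⟩
    · exact ⟨true, fun h' => absurd h' h⟩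
  choose c hc using hc
  have hfin := fin_F n
  have e1 : Cp n = (hfin.toFinset.image (fun v => c v :: v)).card := by
    rw [Finset.card_image_of_injective _ (fun a b h => (List.cons.inj h).2), Cp,
      Set.ncard_eq_toFinset_card _ hfin]
  have e2 : S.card = (S.image (fun v => (!(c v)) :: v)).card := by
    rw [Finset.card_image_of_injective _ (fun a b h => (List.cons.inj h).2)]
  rw [e1, e2, ← Finset.card_union_of_disjoint, ← Set.ncard_coe_finset]
  · apply Set.ncard_le_ncard _ (fin_F (n+1))
    intro w hw
    simp only [Finset.coe_union, Finset.coe_image, Set.mem_union, Set.mem_image,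
      Finset.mem_coe, Set.Finite.mem_toFinset, Set.mem_setOf_eq] at hw ⊢
    rcases hw with ⟨v, hv, rfl⟩ | ⟨v, hv, rfl⟩
    · exact ⟨hc v hv.1, by simp [hv.2]⟩
    · exact ⟨(hS v hv).1 _, by simp [(hS v hv).2]⟩
  · rw [Finset.disjoint_left]
    intro w h1 h2
    simp only [Finset.mem_image] at h1 h2
    obtain ⟨a, _, rfl⟩ := h1
    obtain ⟨b, _, h⟩ := h2
    obtain ⟨p, q⟩ := List.cons.inj h
    subst q
    cases h : c b <;> simp [h] at p

lemma exists_k (n : ℕ) (hn : 10 ≤ n) : ∃ k, k % 2 = 1 ∧ 3 ≤ k ∧ el k < n ∧ n ≤ el (k+2) := by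
  classical
  have hex : ∃ j, n ≤ el (2*j+5) := ⟨n, (by omega : n ≤ 2*n+5).trans (le_el _)⟩
  refine ⟨2 * Nat.find hex + 3, by omega, by omega, ?_, Nat.find_spec hex⟩
  rcases h : Nat.find hex with _ | j
  · simp [el3]; omega
  · have := Nat.find_min hex (m := j) (by omega)
    rw [show 2 * (j+1) + 3 = 2*j+5 by omega]; omega

lemma step4 (n : ℕ) (hn : 10 ≤ n) : Cp n + 4 ≤ Cp (n+1) := by
  classical
  obtain ⟨k, hk, h3, h1, h2⟩ := exists_k n hn
  have A := LS1 n
  have B := LS2 k n hk h3 h2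
  have A' := LSp_compl A
  have B' := LSp_compl B
  have hk0 : 0 < el k := by have := le_el k; omega
  have m1 : el (k-1) < el k := el_mono (by omega)
  have ne : wd uu n ≠ wd (tw k) n := by
    intro h
    have a1 := wd_getD uu h1
    have a2 := wd_getD (tw k) h1
    rw [h, a2, uu_el] at a1
    unfold tw at a1
    rw [if_neg (by omega), show el k - (el k - el (k-1)) = el (k-1) by omega, uu_el] at a1
    simp at a1
  have ha : (wd uu n).head? = some true := by
    obtain ⟨n, rfl⟩ : ∃ m, n = m + 1 := ⟨n-1, by omega⟩
    simp [wd, List.range_succ_eq_map, u0]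
  have hb : (wd (tw k) n).head? = some true := by
    obtain ⟨n, rfl⟩ : ∃ m, n = m + 1 := ⟨n-1, by omega⟩
    simp [wd, List.range_succ_eq_map, u0, tw, hk0]
  have lA := wd_length uu n
  have lB := wd_length (tw k) n
  generalize wd uu n = a at *
  generalize wd (tw k) n = b at *
  have hcard : ({a, b, a.map Bool.not, b.map Bool.not} : Finset Word).card = 4 := by
    have inj : Function.Injective (List.map Bool.not) :=
      List.map_injective_iff.2 (fun x y h => by simpa using h)
    have dif : ∀ x y : Word, x.head? = some true → y.head? = some true → x ≠ y.map Bool.not := by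
      intro x y hx hy h
      rw [h] at hx; simp [hy] at hx
    rw [Finset.card_insert_of_notMem, Finset.card_insert_of_notMem, Finset.card_pair]
    · exact fun h => ne (inj h)
    · simp only [Finset.mem_insert, Finset.mem_singleton, not_or]
      exact ⟨dif _ _ hb ha, dif _ _ hb hb⟩
    · simp only [Finset.mem_insert, Finset.mem_singleton, not_or]
      exact ⟨ne, dif _ _ ha ha, dif _ _ ha hb⟩
  have := grow n {a, b, a.map Bool.not, b.map Bool.not} ?_
  · rwa [hcard] at this
  · intro v hv
    simp only [Finset.mem_insert, Finset.mem_singleton] at hv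
    rcases hv with rfl | rfl | rfl | rfl
    · exact ⟨A, lA⟩
    · exact ⟨B, lB⟩
    · exact ⟨A', by simp [lA]⟩
    · exact ⟨B', by simp [lB]⟩

lemma ext7 (n a b : ℕ) (ha : el n = a) (hb : el (n+1) = b)
    (hA : ∀ i, i < a → uu i = L7.getD i false) (h0 : L7.getD a false = true) (hab : b ≤ 2 * a + 2)
    (h : ∀ i, i < b → a < i → L7.getD i false = xor (te (n+1)) (L7.getD (b-1-i) false)) :
    ∀ i, i < b → uu i = L7.getD i false := by
  have hA' : ∀ i, i ≤ a → uu i = L7.getD i false := by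
    intro i hi
    rcases hi.lt_or_eq with h1 | rfl
    · exact hA i h1
    · rw [h0, ← ha, uu_el]
  intro i hi
  rcases le_or_gt i a with h1 | h1
  · exact hA' i h1
  · have := PP_el (n+1) (b-1-i) (by omega)
    rw [hb, show b - 1 - (b-1-i) = i by omega, hA' (b-1-i) (by omega)] at this
    rw [this, h i hi h1]

lemma uu77 : ∀ i, i < 77 → uu i = L7.getD i false := by
  have e5 : el 5 = 22 := by rw [stepE (n := 4) (by omega) PC4, el4]
  have e6 : el 6 = 40 := by
    have := stepV (n := 5) (by omega) (by omega) (PCn (by omega))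
    simp only [Nat.reduceAdd, Nat.reduceSub, e5, el2] at this; omega
  have e7 : el 7 = 77 := by
    have := stepR (n := 6) (by omega) (PCn (by omega))
    simp only [Nat.reduceAdd, e6] at this; omega
  have h10 : ∀ i, i < 10 → uu i = L7.getD i false := by
    intro i hi
    interval_cases i <;> simp [L7, u0, u1, u2, u3, u4, u5, u6, u7, u8, u9]
  have h22 := ext7 4 10 22 el4 e5 h10 (by decide) (by omega) (by decide)
  have h40 := ext7 5 22 40 e5 e6 h22 (by decide) (by omega) (by decide)
  exact ext7 6 40 77 e6 e7 h40 (by decide) (by omega) (by decide +kernel)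

def win : List Word := (List.range 68).map (fun i => (L7.drop i).take 10)

lemma win_factor : ∀ v ∈ win, FactorUp v ∧ v.length = 10 := by
  intro v hv
  simp only [win, List.mem_map, List.mem_range] at hv
  obtain ⟨i, hi, rfl⟩ := hv
  have hl : L7.length = 77 := by decide
  have hl2 : ((L7.drop i).take 10).length = 10 := by simp [hl]; omega
  refine ⟨?_, hl2⟩
  rw [factor_iff]
  refine ⟨i, fun t ht => ?_⟩
  have ht' := ht
  rw [hl2] at ht'
  rw [uu77 _ (by omega), List.getD_eq_getElem _ _ ht, List.getD_eq_getElem _ _ (by omega)]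
  simp

lemma C10 : 42 ≤ Cp 10 := by
  have h : ((win ++ win.map (List.map Bool.not)).toFinset).card = 42 := by decide +kernel
  rw [← h, ← Set.ncard_coe_finset]
  apply Set.ncard_le_ncard _ (fin_F 10)
  intro v hv
  simp only [List.coe_toFinset, List.mem_append, Set.mem_setOf_eq] at hv ⊢
  rcases hv with hv | hv
  · exact win_factor v hv
  · rw [List.mem_map] at hv
    obtain ⟨w, hw, rfl⟩ := hv
    have := win_factor w hw
    exact ⟨factor_compl this.1, by simp [this.2]⟩

/-- the factor complexity of `u_p = u(1^ω,(EERR)^ω)` satisfies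
`C(n) > 4n` for all `n ≥ 10`. -/
theorem complexity_gt_four_n (n : ℕ) (hn : 10 ≤ n) : 4 * n < Cp n := by
  induction n, hn using Nat.le_induction with
  | base => have := C10; omega
  | succ k hk ih => have := step4 k hk; omega
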